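/- Let G_i, G_j ⊂ ℝ^d be disjoint nonempty finite sets and λ > 0, and let G = G_i ∪ G_j with centroid ḡ. Then the change in regularized k-means energy caused by merging G_i and G_j into the single cluster G (with all other clusters unchanged) is [ λ/|G| + Σ_{x∈G} ‖ḡ − x‖² ] − [ λ/|G_i| + Σ_{x∈G_i} ‖ḡ_i − x‖² + λ/|G_j| + Σ_{x∈G_j} ‖ḡ_j − x‖² ] = (|G_i||G_j|/(|G_i|+|G_j|)) ‖ḡ_i − ḡ_j‖² + λ [ 1/(|G_i|+|G_j|) − 1/|G_i| − 1/|G_j| ]. -/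

import Mathlib

/-!
By the parallel axis identity, the sum of squared distances from a point `p` to a cluster `C` is
the sum of squared distances to the centroid plus `|C| ‖p - c̄‖²`. Apply it to each of the two
clusters with `p = ḡ`, the centroid of the union. Writing `a = |G_i|` and `b = |G_j|`, `ḡ` is the
weighted average of `ḡ_i` and `ḡ_j`, so `ḡ - ḡ_i = b / (a + b) • (ḡ_j - ḡ_i)`, and symmetrically
for `ḡ - ḡ_j`. The extra terms therefore add up to
`(a b² + b a²) / (a + b)² ‖ḡ_i - ḡ_j‖² = a b / (a + b) ‖ḡ_i - ḡ_j‖²`.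
-/

open scoped BigOperators Classical

/-- The centroid of a finite set of points in `ℝ^d`. -/
noncomputable def centroid {d : ℕ} (C : Finset (EuclideanSpace ℝ (Fin d))) :
    EuclideanSpace ℝ (Fin d) :=
  (C.card : ℝ)⁻¹ • ∑ x ∈ C, x

/-- The variance of a finite set of points in `ℝ^d`. -/
noncomputable def clVar {d : ℕ} (C : Finset (EuclideanSpace ℝ (Fin d))) : ℝ :=
  (C.card : ℝ)⁻¹ * ∑ x ∈ C, ‖centroid C - x‖ ^ 2

/-- `𝒢` is a partition of `X` into nonempty clusters. -/
def IsPartition {d : ℕ} (X : Finset (EuclideanSpace ℝ (Fin d)))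
    (𝒢 : Finset (Finset (EuclideanSpace ℝ (Fin d)))) : Prop :=
  (∀ C ∈ 𝒢, C.Nonempty) ∧
  (∀ C ∈ 𝒢, ∀ D ∈ 𝒢, C ≠ D → Disjoint C D) ∧
  𝒢.biUnion id = X

/-- The regularized k-means energy of a partition `𝒢` with parameter `lam`:
`E(X,𝒢,λ) = λ Σ_i 1/|G_i| + Σ_i Σ_{x ∈ G_i} ‖ḡ_i − x‖²`. -/
noncomputable def energy {d : ℕ} (𝒢 : Finset (Finset (EuclideanSpace ℝ (Fin d))))
    (lam : ℝ) : ℝ :=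
  lam * ∑ C ∈ 𝒢, (C.card : ℝ)⁻¹ + ∑ C ∈ 𝒢, ∑ x ∈ C, ‖centroid C - x‖ ^ 2

lemma card_smul_centroid {d : ℕ} {C : Finset (EuclideanSpace ℝ (Fin d))} (hC : C.Nonempty) :
    (C.card : ℝ) • centroid C = ∑ x ∈ C, x := by
  have h : (C.card : ℝ) ≠ 0 := by exact_mod_cast hC.card_ne_zero
  rw [centroid, smul_inv_smul₀ h]

/-- The parallel axis (Huygens–Steiner) identity. -/
lemma sum_norm_sub_sq {d : ℕ} {C : Finset (EuclideanSpace ℝ (Fin d))} (hC : C.Nonempty)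
    (p : EuclideanSpace ℝ (Fin d)) :
    ∑ x ∈ C, ‖p - x‖ ^ 2 =
      ∑ x ∈ C, ‖centroid C - x‖ ^ 2 + (C.card : ℝ) * ‖p - centroid C‖ ^ 2 := by
  -- The deviations from the centroid sum to zero, which kills the cross term.
  have h0 : ∑ x ∈ C, (centroid C - x) = 0 := by
    rw [Finset.sum_sub_distrib, Finset.sum_const, ← card_smul_centroid hC,
      Nat.cast_smul_eq_nsmul, sub_self]
  have h1 : ∀ x, ‖p - x‖ ^ 2 = ‖p - centroid C‖ ^ 2
      + 2 * inner ℝ (p - centroid C) (centroid C - x) + ‖centroid C - x‖ ^ 2 := by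
    intro x
    rw [← norm_add_sq_real, sub_add_sub_cancel]
  rw [Finset.sum_congr rfl fun x _ => h1 x, Finset.sum_add_distrib, Finset.sum_add_distrib,
    ← Finset.mul_sum, ← inner_sum, h0, inner_zero_right, Finset.sum_const, nsmul_eq_mul]
  ring

lemma centroid_union_sub_left {d : ℕ} {A B : Finset (EuclideanSpace ℝ (Fin d))}
    (hA : A.Nonempty) (hB : B.Nonempty) (hd : Disjoint A B) :
    centroid (A ∪ B) - centroid A =
      ((B.card : ℝ) / ((A.card : ℝ) + (B.card : ℝ))) • (centroid B - centroid A) := by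
  have hA' : (0 : ℝ) < A.card := by exact_mod_cast hA.card_pos
  have hB' : (0 : ℝ) < B.card := by exact_mod_cast hB.card_pos
  have hs : (A.card : ℝ) + B.card ≠ 0 := by positivity
  rw [centroid, Finset.sum_union hd, Finset.card_union_of_disjoint hd, Nat.cast_add,
    ← card_smul_centroid hA, ← card_smul_centroid hB]
  match_scalars <;> field_simp
  ring

/-- Merging formula: the change in regularized k-means energy caused by merging two
disjoint nonempty clusters `G_i`, `G_j` into `G = G_i ∪ G_j` equals
`(|G_i||G_j|/(|G_i|+|G_j|)) ‖ḡ_i − ḡ_j‖² + λ [1/(|G_i|+|G_j|) − 1/|G_i| − 1/|G_j|]`. -/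
theorem stmt7 {d : ℕ} (Gi Gj : Finset (EuclideanSpace ℝ (Fin d)))
    (hi : Gi.Nonempty) (hj : Gj.Nonempty) (hd : Disjoint Gi Gj)
    (lam : ℝ) (hlam : 0 < lam) :
    (lam / (((Gi ∪ Gj).card : ℝ)) + ∑ x ∈ Gi ∪ Gj, ‖centroid (Gi ∪ Gj) - x‖ ^ 2) -
      ((lam / (Gi.card : ℝ) + ∑ x ∈ Gi, ‖centroid Gi - x‖ ^ 2) +
        (lam / (Gj.card : ℝ) + ∑ x ∈ Gj, ‖centroid Gj - x‖ ^ 2)) =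
      (Gi.card : ℝ) * (Gj.card : ℝ) / ((Gi.card : ℝ) + (Gj.card : ℝ)) *
          ‖centroid Gi - centroid Gj‖ ^ 2 +
        lam * (1 / ((Gi.card : ℝ) + (Gj.card : ℝ)) - 1 / (Gi.card : ℝ) - 1 / (Gj.card : ℝ)) := by
  have ha : (0 : ℝ) < Gi.card := by exact_mod_cast hi.card_pos
  have hb : (0 : ℝ) < Gj.card := by exact_mod_cast hj.card_pos
  have h1 := centroid_union_sub_left hi hj hd
  have h2 := centroid_union_sub_left hj hi hd.symm
  rw [Finset.union_comm Gj Gi] at h2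
  rw [Finset.sum_union hd, sum_norm_sub_sq hi, sum_norm_sub_sq hj, h1, h2,
    Finset.card_union_of_disjoint hd, Nat.cast_add, norm_smul, norm_smul,
    norm_sub_rev (centroid Gj), mul_pow, mul_pow, Real.norm_eq_abs, Real.norm_eq_abs,
    sq_abs, sq_abs]
  field_simp
  ring
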